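/- Let (Fₙ) be the Fibonacci sequence with F₁ = F₂ = 1 and F_{n+2} = F_{n+1} + F_n, and let π denote the prime counting function. Then for every n ≥ 2, π(F_{n+1}) > π(Fₙ); that is, there is at least one prime p with Fₙ < p ≤ F_{n+1}. -/

import Mathlib

open Nat

/-!
By Chebyshev's method, the logarithm of the integer `⌊x⌋! / (⌊x/2⌋! ⌊x/3⌋! ⌊x/6⌋!)` lies between
`ψ x - ψ (x / 6)` and `ψ x + ψ (x / 5)`, while Stirling's formula evaluates it as `A x` up to a
logarithmic error, for an explicit constant `A > 1`. Iterating the first bound gives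
`ψ x ≲ 1.2 A x`, and the second one then gives `ψ x ≳ 0.76 A x`. Since `1.2 / 0.76 < 8 / 5`, every
interval `(y, 8 y / 5]` with `y` large contains a prime, and a chain of primes with successive
ratios at most `8 / 5` covers the remaining `y ≥ 4`. Finally `fib (n + 1) / fib n ≥ 8 / 5` as soon
as `n ≥ 5`.
-/

section Chebyshev

open Finset
open scoped Chebyshev Nat.Prime ArithmeticFunction.vonMangoldt

theorem sum_Ioc_div_eq_sum_Ioc {R : Type*} [NonUnitalNonAssocSemiring R] (f : ℕ → R) {g : ℕ → R}
    (hg : g 0 = 0) (N k : ℕ) :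
    ∑ d ∈ Ioc 0 (N / k), f d * g (N / k / d) = ∑ d ∈ Ioc 0 N, f d * g (N / d / k) := by
  simp only [Nat.div_right_comm N k]
  refine sum_subset (Ioc_subset_Ioc_right (Nat.div_le_self N k)) fun d hd hd' ↦ ?_
  have hlt : N / k < d := by simp_all
  rw [Nat.div_right_comm, Nat.div_eq_of_lt hlt, hg, mul_zero]

theorem log_factorial_eq_sum_vonMangoldt (N : ℕ) :
    Real.log N ! = ∑ d ∈ Ioc 0 N, Λ d * (N / d : ℕ) := by
  simp only [← ArithmeticFunction.sum_Ioc_mul_zeta_eq_sum, ArithmeticFunction.vonMangoldt_mul_zeta,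
    ArithmeticFunction.log_apply]
  induction N with
  | zero => simp
  | succ N ih =>
    rw [sum_Ioc_succ_top N.zero_le, ← ih, factorial_succ, cast_mul,
      Real.log_mul (by positivity) (by positivity), add_comm]

theorem log_factorial_floor_div_eq_sum_vonMangoldt (x : ℝ) (k : ℕ) :
    Real.log ⌊x / k⌋₊ ! = ∑ d ∈ Ioc 0 ⌊x⌋₊, Λ d * (⌊x⌋₊ / d / k : ℕ) := by
  rw [floor_div_natCast, log_factorial_eq_sum_vonMangoldt]
  exact sum_Ioc_div_eq_sum_Ioc Λ (g := Nat.cast) cast_zero _ _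

-- `min 1 (⌊x⌋₊ / d / k)` is the indicator of `d ≤ x / k`, in a form that `omega` understands.
theorem psi_div_eq_sum_vonMangoldt (x : ℝ) (k : ℕ) :
    ψ (x / k) = ∑ d ∈ Ioc 0 ⌊x⌋₊, Λ d * (min 1 (⌊x⌋₊ / d / k) : ℕ) := by
  rw [← sum_Ioc_div_eq_sum_Ioc Λ (g := fun m ↦ (min 1 m : ℕ)) (by simp), ← floor_div_natCast,
    Chebyshev.psi]
  refine sum_congr rfl fun d hd ↦ ?_
  obtain ⟨hd_pos, hd_le⟩ := mem_Ioc.1 hd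
  rw [min_eq_left (Nat.div_pos hd_le hd_pos), cast_one, mul_one]

/-- Chebyshev's combination of factorials, in logarithmic form. As `1 = 1/2 + 1/3 + 1/6`, the terms
of order `x log x` in Stirling's formula cancel. -/
noncomputable def chebyshevSum (x : ℝ) : ℝ :=
  Real.log ⌊x⌋₊ ! - Real.log ⌊x / 2⌋₊ ! - Real.log ⌊x / 3⌋₊ ! - Real.log ⌊x / 6⌋₊ !

/-- The constant `A` with `chebyshevSum x = A x + O(log x)`. -/
noncomputable def chebyshevConst : ℝ := Real.log 2 / 2 + Real.log 3 / 3 + Real.log 6 / 6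

theorem psi_sub_psi_div_six_le_chebyshevSum (x : ℝ) : ψ x - ψ (x / 6) ≤ chebyshevSum x := by
  have hcoeff (m : ℕ) : min 1 (m / 1) + m / 2 + m / 3 + m / 6 ≤ m / 1 + min 1 (m / 6) := by omega
  suffices ψ (x / (1 : ℕ)) + Real.log ⌊x / (2 : ℕ)⌋₊ ! + Real.log ⌊x / (3 : ℕ)⌋₊ ! +
      Real.log ⌊x / (6 : ℕ)⌋₊ ! ≤ Real.log ⌊x / (1 : ℕ)⌋₊ ! + ψ (x / (6 : ℕ)) by
    simp only [cast_one, div_one, cast_ofNat] at this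
    unfold chebyshevSum
    linarith
  simp only [psi_div_eq_sum_vonMangoldt, log_factorial_floor_div_eq_sum_vonMangoldt,
    ← sum_add_distrib, ← mul_add, ← cast_add]
  refine sum_le_sum fun d _ ↦
    mul_le_mul_of_nonneg_left ?_ ArithmeticFunction.vonMangoldt_nonneg
  exact_mod_cast hcoeff (⌊x⌋₊ / d)

theorem chebyshevSum_le_psi_add_psi_div_five (x : ℝ) : chebyshevSum x ≤ ψ x + ψ (x / 5) := by
  have hcoeff (m : ℕ) :
      m / 1 ≤ min 1 (m / 1) + min 1 (m / 5) + m / 2 + m / 3 + m / 6 := by omega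
  suffices Real.log ⌊x / (1 : ℕ)⌋₊ ! ≤ ψ (x / (1 : ℕ)) + ψ (x / (5 : ℕ)) +
      Real.log ⌊x / (2 : ℕ)⌋₊ ! + Real.log ⌊x / (3 : ℕ)⌋₊ ! + Real.log ⌊x / (6 : ℕ)⌋₊ ! by
    simp only [cast_one, div_one, cast_ofNat] at this
    unfold chebyshevSum
    linarith
  simp only [psi_div_eq_sum_vonMangoldt, log_factorial_floor_div_eq_sum_vonMangoldt,
    ← sum_add_distrib, ← mul_add, ← cast_add]
  refine sum_le_sum fun d _ ↦
    mul_le_mul_of_nonneg_left ?_ ArithmeticFunction.vonMangoldt_nonneg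
  exact_mod_cast hcoeff (⌊x⌋₊ / d)

-- The tangent at `x` lies below the graph of the convex function `t ↦ t log t - t`.
theorem sub_mul_log_le_mul_log_sub_self {x y : ℝ} (hx : 0 < x) (hy : 0 < y) :
    (y - x) * Real.log x ≤ (y * Real.log y - y) - (x * Real.log x - x) := by
  have hlog : Real.log x - Real.log y ≤ x / y - 1 := by
    rw [← Real.log_div hx.ne' hy.ne']
    exact Real.log_le_sub_one_of_pos (div_pos hx hy)
  have hmul : y * (Real.log x - Real.log y) ≤ x - y := calc
    _ ≤ y * (x / y - 1) := by gcongr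
    _ = x - y := by field_simp
  linarith

theorem log_factorial_mem_Icc {n : ℕ} (hn : 1 ≤ n) :
    Real.log n ! ∈ Set.Icc (n * Real.log n - n + 1) (n * Real.log n - n + 1 + Real.log n) := by
  induction n, hn using Nat.le_induction with
  | base => simp
  | succ n hn ih =>
    have hpos : (0 : ℝ) < n := by exact_mod_cast hn
    have hlower := sub_mul_log_le_mul_log_sub_self (x := n + 1) (y := n) (by positivity) hpos
    have hupper := sub_mul_log_le_mul_log_sub_self (x := n) (y := n + 1) hpos (by positivity)
    rw [factorial_succ, cast_mul, Real.log_mul (by positivity) (by positivity)]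
    push_cast
    constructor <;> linarith [ih.1, ih.2]

theorem abs_log_factorial_floor_sub_le {x : ℝ} (hx : 1 ≤ x) :
    |Real.log ⌊x⌋₊ ! - (x * Real.log x - x + 1)| ≤ Real.log x := by
  have hn : 1 ≤ ⌊x⌋₊ := (one_le_floor_iff x).2 hx
  have hn' : (1 : ℝ) ≤ ⌊x⌋₊ := by exact_mod_cast hn
  have hle : (⌊x⌋₊ : ℝ) ≤ x := floor_le (by linarith)
  have hlt : x < ⌊x⌋₊ + 1 := lt_floor_add_one x
  have hmono : Real.log ⌊x⌋₊ ≤ Real.log x := by gcongr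
  obtain ⟨hlower, hupper⟩ := log_factorial_mem_Icc hn
  have hincr := sub_mul_log_le_mul_log_sub_self (x := ⌊x⌋₊) (y := x) (by linarith) (by linarith)
  have hincr' := sub_mul_log_le_mul_log_sub_self (x := x) (y := ⌊x⌋₊) (by linarith) (by linarith)
  have hnonneg : 0 ≤ (x - ⌊x⌋₊) * Real.log ⌊x⌋₊ :=
    mul_nonneg (by linarith) (Real.log_nonneg hn')
  have hle_log : (x - ⌊x⌋₊) * Real.log x ≤ Real.log x :=
    mul_le_of_le_one_left (Real.log_nonneg hx) (by linarith)
  rw [abs_le]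
  constructor <;> linarith

theorem log_six_eq_log_two_add_log_three : Real.log 6 = Real.log 2 + Real.log 3 := by
  rw [← Real.log_mul two_ne_zero three_ne_zero]
  norm_num

theorem one_le_chebyshevConst : 1 ≤ chebyshevConst := by
  rw [chebyshevConst, log_six_eq_log_two_add_log_three]
  linarith [Real.log_two_gt_d9, Real.log_three_gt_d9]

theorem abs_chebyshevSum_sub_le {x : ℝ} (hx : 6 ≤ x) :
    |chebyshevSum x - chebyshevConst * x| ≤ 4 * Real.log x := by
  have h₁ := abs_le.1 (abs_log_factorial_floor_sub_le (x := x) (by linarith))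
  have h₂ := abs_le.1 (abs_log_factorial_floor_sub_le (x := x / 2) (by linarith))
  have h₃ := abs_le.1 (abs_log_factorial_floor_sub_le (x := x / 3) (by linarith))
  have h₆ := abs_le.1 (abs_log_factorial_floor_sub_le (x := x / 6) (by linarith))
  have hx0 : x ≠ 0 := by positivity
  rw [Real.log_div hx0 (by norm_num)] at h₂ h₃ h₆
  have hlog : 1 ≤ Real.log 2 + Real.log 3 := by
    linarith [Real.log_two_gt_d9, Real.log_three_gt_d9]
  rw [abs_le, chebyshevSum, chebyshevConst]
  constructor <;> linarith [log_six_eq_log_two_add_log_three]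

theorem psi_le_of_lt_six {x : ℝ} (hx : 1 ≤ x) (hx6 : x < 6) :
    ψ x ≤ 6 / 5 * x + 2 * Real.log x ^ 2 := by
  have hcount : π ⌊x⌋₊ ≤ 3 := calc
    π ⌊x⌋₊ ≤ π 5 := monotone_primeCounting (Nat.le_of_lt_succ ((floor_lt' (by simp)).2 hx6))
    _ = 3 := by decide
  calc ψ x ≤ π ⌊x⌋₊ * Real.log x := Chebyshev.psi_le_primeCounting_mul_log' x
    _ ≤ 3 * Real.log x := by
      gcongr
      · exact Real.log_nonneg hx
      · exact_mod_cast hcount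
    _ ≤ 6 / 5 * x + 2 * Real.log x ^ 2 := by
      nlinarith [Real.log_le_sub_one_of_pos (by positivity : 0 < x),
        sq_nonneg (Real.log x - 9 / 20)]

-- The error `4 log x` of one step `x ↦ x / 6` is incurred at most about `log x / log 6` times.
theorem psi_le_chebyshevConst_mul {x : ℝ} (hx : 1 ≤ x) :
    ψ x ≤ 6 / 5 * chebyshevConst * x + 4 / Real.log 6 * Real.log x ^ 2 := by
  obtain ⟨k, hk⟩ := pow_unbounded_of_one_lt x (by norm_num : (1 : ℝ) < 6)
  induction k generalizing x with
  | zero => linarith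
  | succ k ih =>
    have hlog6 : 0 < Real.log 6 := Real.log_pos (by norm_num)
    rcases lt_or_ge x 6 with hx6 | hx6
    · have hlog6_le : Real.log 6 ≤ 2 := by
        linarith [log_six_eq_log_two_add_log_three, Real.log_two_lt_d9, Real.log_three_lt_d9]
      calc ψ x ≤ 6 / 5 * 1 * x + 2 * Real.log x ^ 2 := by simpa using psi_le_of_lt_six hx hx6
        _ ≤ _ := by
          gcongr
          · exact one_le_chebyshevConst
          · rw [le_div_iff₀ hlog6]
            linarith
    · have hsum := abs_le.1 (abs_chebyshevSum_sub_le hx6)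
      have hdiv : ψ (x / 6) ≤ 6 / 5 * chebyshevConst * (x / 6) +
          4 / Real.log 6 * (Real.log x - Real.log 6) ^ 2 := by
        rw [← Real.log_div (by positivity) (by norm_num)]
        exact ih (by linarith) (by rw [pow_succ] at hk; linarith)
      have hsq : 4 / Real.log 6 * (Real.log x - Real.log 6) ^ 2 =
          4 / Real.log 6 * Real.log x ^ 2 - 8 * Real.log x + 4 * Real.log 6 := by
        field_simp
        ring
      have hlog_le : Real.log 6 ≤ Real.log x := by gcongr
      linarith [psi_sub_psi_div_six_le_chebyshevSum x]

theorem chebyshevConst_mul_le_psi {x : ℝ} (hx : 6 ≤ x) :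
    19 / 25 * chebyshevConst * x - 4 / Real.log 6 * Real.log x ^ 2 - 4 * Real.log x ≤ ψ x := by
  have hsum := abs_le.1 (abs_chebyshevSum_sub_le hx)
  have hdiv : ψ (x / 5) ≤ 6 / 5 * chebyshevConst * (x / 5) + 4 / Real.log 6 * Real.log x ^ 2 := by
    refine (psi_le_chebyshevConst_mul (by linarith)).trans ?_
    have : 0 ≤ Real.log (x / 5) := Real.log_nonneg (by linarith)
    have : 0 < Real.log 6 := Real.log_pos (by norm_num)
    gcongr
    linarith
  linarith [chebyshevSum_le_psi_add_psi_div_five x]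

theorem log_le_sqrt_div {x : ℝ} (hx : 2 ^ 24 ≤ x) : Real.log x ≤ √x / 225 := by
  have hsqrt : 2 ^ 12 ≤ √x := Real.le_sqrt_of_sq_le (by linarith)
  have hpos : 0 < √x := by linarith
  have htangent := Real.log_le_sub_one_of_pos (div_pos hpos (by norm_num : (0 : ℝ) < 2 ^ 12))
  rw [Real.log_div hpos.ne' (by norm_num), Real.log_pow, Real.log_sqrt (by linarith)] at htangent
  push_cast at htangent
  linarith [Real.log_two_lt_d9]

theorem log_sq_add_log_add_sqrt_mul_log_lt {x : ℝ} (hx : 2 ^ 24 ≤ x) :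
    8 / Real.log 6 * Real.log x ^ 2 + 4 * Real.log x + 2 * √x * Real.log x < x / 100 := by
  have hlog_nonneg : 0 ≤ Real.log x := Real.log_nonneg (by linarith)
  have hsqrt : 2 ^ 12 ≤ √x := Real.le_sqrt_of_sq_le (by linarith)
  have hlog6 : 8 / Real.log 6 ≤ 5 := by
    rw [div_le_iff₀ (Real.log_pos (by norm_num))]
    linarith [log_six_eq_log_two_add_log_three, Real.log_two_gt_d9, Real.log_three_gt_d9]
  calc
    _ ≤ 5 * (√x / 225) ^ 2 + 4 * (√x / 225) + 2 * √x * (√x / 225) := by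
      gcongr <;> exact log_le_sqrt_div hx
    _ < √x ^ 2 / 100 := by nlinarith
    _ = x / 100 := by rw [Real.sq_sqrt (by linarith)]

theorem theta_five_eighths_mul_lt_theta {x : ℝ} (hx : 2 ^ 24 ≤ x) : θ (5 / 8 * x) < θ x := by
  have hupper : θ (5 / 8 * x) ≤ 3 / 4 * chebyshevConst * x + 4 / Real.log 6 * Real.log x ^ 2 := calc
    θ (5 / 8 * x) ≤ ψ (5 / 8 * x) := Chebyshev.theta_le_psi _
    _ ≤ 6 / 5 * chebyshevConst * (5 / 8 * x) + 4 / Real.log 6 * Real.log (5 / 8 * x) ^ 2 :=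
      psi_le_chebyshevConst_mul (by linarith)
    _ ≤ 6 / 5 * chebyshevConst * (5 / 8 * x) + 4 / Real.log 6 * Real.log x ^ 2 := by
      have : 0 ≤ Real.log (5 / 8 * x) := Real.log_nonneg (by linarith)
      gcongr
      linarith
    _ = _ := by ring
  have hlower : 19 / 25 * chebyshevConst * x - 4 / Real.log 6 * Real.log x ^ 2 - 4 * Real.log x
      - 2 * √x * Real.log x ≤ θ x := by
    linarith [chebyshevConst_mul_le_psi (x := x) (by linarith),
      Chebyshev.psi_sub_theta_le (x := x) (by linarith)]
  have hmain : x / 100 ≤ chebyshevConst * x / 100 := by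
    gcongr
    exact le_mul_of_one_le_left (by linarith) one_le_chebyshevConst
  have hsplit : 8 / Real.log 6 * Real.log x ^ 2 = 2 * (4 / Real.log 6 * Real.log x ^ 2) := by ring
  linarith [log_sq_add_log_add_sqrt_mul_log_lt hx]

theorem exists_prime_of_theta_lt_theta {x y : ℝ} (h : θ y < θ x) :
    ∃ p : ℕ, p.Prime ∧ y < p ∧ p ≤ x := by
  contrapose! h
  refine sum_le_sum_of_subset_of_nonneg (fun p hp ↦ ?_) fun p _ _ ↦ Real.log_natCast_nonneg p
  obtain ⟨⟨hpos, hpx⟩, hp⟩ : (0 < p ∧ p ≤ ⌊x⌋₊) ∧ p.Prime := by simpa using hp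
  have hpx' : (p : ℝ) ≤ x := (le_floor_iff' hpos.ne').1 hpx
  have hpy : (p : ℝ) ≤ y := not_lt.1 fun hyp ↦ (h p hp hyp).not_ge hpx'
  simpa [hpos, hp] using le_floor hpy

end Chebyshev

theorem exists_mem_lt_and_mul_le_of_isChain {a b m n : ℕ} {l : List ℕ}
    (hchain : (m :: l).IsChain fun p q ↦ a * q ≤ b * p) (hmn : m ≤ n) (hn : ∃ p ∈ l, n < p) :
    ∃ p ∈ l, n < p ∧ a * p ≤ b * n := by
  induction l generalizing m with
  | nil => simp at hn
  | cons q l ih =>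
    rw [List.isChain_cons_cons] at hchain
    rcases lt_or_ge n q with hnq | hqn
    · exact ⟨q, List.mem_cons_self, hnq, hchain.1.trans (Nat.mul_le_mul_left b hmn)⟩
    · obtain ⟨p, hp, hlt, hle⟩ := ih hchain.2 hqn (by simpa [hqn.not_gt] using hn)
      exact ⟨p, List.mem_cons_of_mem q hp, hlt, hle⟩

theorem exists_prime_lt_and_five_mul_le_eight_mul {n : ℕ} (hn : 4 ≤ n) :
    ∃ p : ℕ, p.Prime ∧ n < p ∧ 5 * p ≤ 8 * n := by
  rcases lt_or_ge n 13531633 with hsmall | hlarge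
  · let l := [5, 7, 11, 17, 23, 31, 47, 73, 113, 179, 283, 449, 709, 1129, 1801, 2879, 4603, 7351,
      11743, 18787, 30059, 48091, 76943, 123091, 196927, 315083, 504121, 806581, 1290503, 2064793,
      3303667, 5285807, 8457287, 13531633]
    have hprime : ∀ p ∈ l, p.Prime := by
      simp only [l, List.forall_mem_cons]
      norm_num
    have hchain : (4 :: l).IsChain fun p q ↦ 5 * q ≤ 8 * p := by decide
    obtain ⟨p, hp, hnp, hpn⟩ :=
      exists_mem_lt_and_mul_le_of_isChain hchain hn ⟨13531633, by simp [l], hsmall⟩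
    exact ⟨p, hprime p hp, hnp, hpn⟩
  · have hx : (2 : ℝ) ^ 24 ≤ 8 / 5 * n := by
      have : (13531633 : ℝ) ≤ n := by exact_mod_cast hlarge
      linarith
    obtain ⟨p, hp, hnp, hpn⟩ := exists_prime_of_theta_lt_theta (theta_five_eighths_mul_lt_theta hx)
    refine ⟨p, hp, ?_, ?_⟩
    · exact_mod_cast (by linarith : (n : ℝ) < p)
    · exact_mod_cast (by linarith : 5 * (p : ℝ) ≤ 8 * n)

theorem eight_mul_fib_le_and_eight_mul_fib_succ_le {n : ℕ} (hn : 5 ≤ n) :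
    8 * fib n ≤ 5 * fib (n + 1) ∧ 8 * fib (n + 1) ≤ 13 * fib n := by
  induction n, hn using Nat.le_induction with
  | base => decide
  | succ n hn ih =>
    rw [fib_add_two]
    omega

theorem exists_prime_fib_lt_and_le_fib_succ {n : ℕ} (hn : 2 ≤ n) :
    ∃ p : ℕ, p.Prime ∧ fib n < p ∧ p ≤ fib (n + 1) := by
  rcases lt_or_ge n 5 with hsmall | hlarge
  · interval_cases n
    · exact ⟨2, by decide⟩
    · exact ⟨3, by decide⟩
    · exact ⟨5, by decide⟩
  · have hfib : 4 ≤ fib n := le_trans (by decide) (fib_mono hlarge)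
    obtain ⟨p, hp, hlt, hle⟩ := exists_prime_lt_and_five_mul_le_eight_mul hfib
    have hratio := (eight_mul_fib_le_and_eight_mul_fib_succ_le hlarge).1
    exact ⟨p, hp, hlt, by omega⟩

theorem primeCounting_lt_primeCounting_of_prime {m n p : ℕ} (hp : p.Prime) (hmp : m < p)
    (hpn : p ≤ n) : primeCounting m < primeCounting n :=
  (count_monotone Nat.Prime hmp).trans_lt (count_strict_mono hp (lt_succ_of_le hpn))

/-- For n ≥ 2, π(F_{n+1}) > π(Fₙ): there is a prime p with Fₙ < p ≤ F_{n+1}. -/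
theorem primeCounting_fib_strict_mono :
    ∀ n : ℕ, 2 ≤ n →
      Nat.primeCounting (Nat.fib n) < Nat.primeCounting (Nat.fib (n + 1)) ∧
      ∃ p : ℕ, p.Prime ∧ Nat.fib n < p ∧ p ≤ Nat.fib (n + 1) := by
  intro n hn
  obtain ⟨p, hp, hlt, hle⟩ := exists_prime_fib_lt_and_le_fib_succ hn
  exact ⟨primeCounting_lt_primeCounting_of_prime hp hlt hle, p, hp, hlt, hle⟩
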